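/- Let K be a positive integer, P > 0, h ∈ ℝᴷ, and ã ∈ ℝᴷ with ã ≠ 0, and let β_k > 0. Then for every α ∈ ℝ with P‖αh − ã‖² + α² > 0, max{0, (1/2)·log₂(P β_k² / (P‖αh − ã‖² + α²))} ≤ max{0, −(1/2)·log₂(‖ã‖² − P⟨h,ã⟩²/(1+P‖h‖²)) + (1/2)·log₂ β_k²}, with equality when α = P⟨h,ã⟩/(1 + P‖h‖²). In other words, the supremum over α of [(1/2)log₂(Pβ_k²/(P‖αh−ã‖²+α²))]⁺ equals the computation rate expression r_k(h, a, β) = [−(1/2)log₂(‖ã‖² − P⟨h,ã⟩²/(1+P‖h‖²)) + (1/2)log₂ β_k²]⁺. -/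

import Mathlib

/-- optimizing the achievable rate over the receiver scaling `α`
yields the closed-form computation rate: for every `α` with positive equivalent
noise power `N(α) = P‖α•h − ta‖² + α²`,
`[½log₂(Pβ_k²/N(α))]⁺ ≤ [−½log₂(‖ta‖² − P⟨h,ta⟩²/(1+P‖h‖²)) + ½log₂ β_k²]⁺`,
with equality at the MMSE scaling `α = P⟨h,ta⟩/(1+P‖h‖²)`. -/
theorem rate_optimization_over_alpha (K : ℕ) (hK : 0 < K) (P : ℝ) (hP : 0 < P)
    (h ta : EuclideanSpace ℝ (Fin K)) (hta : ta ≠ 0) (βk : ℝ) (hβk : 0 < βk) :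
    (∀ α : ℝ, 0 < P * ‖α • h - ta‖ ^ 2 + α ^ 2 →
      max 0 ((1 / 2) * Real.logb 2 (P * βk ^ 2 / (P * ‖α • h - ta‖ ^ 2 + α ^ 2))) ≤
        max 0 (-(1 / 2) * Real.logb 2 (‖ta‖ ^ 2 - P * (inner ℝ h ta : ℝ) ^ 2 / (1 + P * ‖h‖ ^ 2))
          + (1 / 2) * Real.logb 2 (βk ^ 2))) ∧
    (let αstar : ℝ := P * (inner ℝ h ta : ℝ) / (1 + P * ‖h‖ ^ 2);
      max 0 ((1 / 2) * Real.logb 2 (P * βk ^ 2 / (P * ‖αstar • h - ta‖ ^ 2 + αstar ^ 2))) =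
        max 0 (-(1 / 2) * Real.logb 2 (‖ta‖ ^ 2 - P * (inner ℝ h ta : ℝ) ^ 2 / (1 + P * ‖h‖ ^ 2))
          + (1 / 2) * Real.logb 2 (βk ^ 2))) := by
  have hN : ∀ α : ℝ, P * ‖α • h - ta‖ ^ 2 + α ^ 2 =
      P * (‖ta‖ ^ 2 - P * (inner ℝ h ta : ℝ) ^ 2 / (1 + P * ‖h‖ ^ 2)) +
      (1 + P * ‖h‖ ^ 2) * (α - P * (inner ℝ h ta : ℝ) / (1 + P * ‖h‖ ^ 2)) ^ 2 := by
    intro α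
    have hH : (1 + P * ‖h‖ ^ 2) ≠ 0 := by positivity
    rw [norm_sub_sq_real, norm_smul, inner_smul_left, mul_pow, Real.norm_eq_abs, sq_abs]
    simp only [conj_trivial]
    field_simp
    ring
  have hD : 0 < ‖ta‖ ^ 2 - P * (inner ℝ h ta : ℝ) ^ 2 / (1 + P * ‖h‖ ^ 2) := by
    have hH : 0 < (1 + P * ‖h‖ ^ 2) := by positivity
    have ht : 0 < ‖ta‖ ^ 2 := by positivity
    have hc : (inner ℝ h ta : ℝ) ^ 2 ≤ ‖h‖ ^ 2 * ‖ta‖ ^ 2 := by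
      rw [← mul_pow]
      exact sq_le_sq' (neg_le_of_abs_le (abs_real_inner_le_norm h ta)) (real_inner_le_norm h ta)
    rw [sub_pos, div_lt_iff₀ hH]
    nlinarith [mul_le_mul_of_nonneg_left hc hP.le]
  have hR : -(1 / 2) * Real.logb 2 (‖ta‖ ^ 2 - P * (inner ℝ h ta : ℝ) ^ 2 / (1 + P * ‖h‖ ^ 2))
          + (1 / 2) * Real.logb 2 (βk ^ 2) =
      (1 / 2) * Real.logb 2 (P * βk ^ 2 /
        (P * (‖ta‖ ^ 2 - P * (inner ℝ h ta : ℝ) ^ 2 / (1 + P * ‖h‖ ^ 2)))) := by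
    rw [mul_div_mul_left _ _ hP.ne', Real.logb_div (by positivity) hD.ne']
    ring
  rw [hR]
  constructor
  · intro α hα
    refine max_le_max le_rfl (mul_le_mul_of_nonneg_left ?_ (by norm_num))
    refine Real.logb_le_logb_of_le (by norm_num) (by positivity) ?_
    refine div_le_div_of_nonneg_left (by positivity) (mul_pos hP hD) ?_
    rw [hN α]
    exact le_add_of_nonneg_right (by positivity)
  · intro αstar
    rw [hN αstar, sub_self]
    simp
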